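/- arXiv:2102.08200 — 2 statements merged into one kernel-verified Lean document; each statement's English description precedes it below -/
import Mathlib

section
/- Let A be a Q(q)-algebra, let B_i, B_j ∈ A, and let Z be a central element of A. Define the ı-divided powers B^{(m)}_{i,p̄} of B_i (p̄ ∈ Z/2) with central parameter Z as in the closed formulas of the paper. Suppose that the minimal-degree ıSerre relation ∑_{r+s=2} (−1)^r B^{(r)}_{i,p̄} B_j B^{(s)}_{i,p̄+1̄} = 0 holds for both parities p̄ (the case a_{ij} = −1, n = 1). Then the next relation of the same shape in degree 4 also holds for both parities: ∑_{r+s=4} (−1)^r B^{(r)}_{i,p̄} B_j B^{(s)}_{i,p̄+1̄} = 0. -/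
noncomputable section

abbrev K : Type := RatFunc ℚ

/-- The indeterminate `q` in `ℚ(q)`. -/
def qq : K := RatFunc.X

/-- Balanced quantum integer at base `x`. -/
def qintx (x : K) (m : ℤ) : K := (x ^ m - x ^ (-m)) / (x - x⁻¹)

/-- Balanced quantum integer `[m]_q`. -/
def qint (m : ℤ) : K := qintx qq m

/-- Quantum factorial at base `x`. -/
def qfactx (x : K) (m : ℕ) : K := ∏ j ∈ Finset.range m, qintx x ((j : ℤ) + 1)

/-- Quantum factorial `[m]_q!`. -/
def qfact (m : ℕ) : K := qfactx qq m

/-- Gaussian binomial coefficient at base `x` (zero when `r > m`). -/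
def qbinomx (x : K) (m r : ℕ) : K :=
  if r ≤ m then qfactx x m / (qfactx x r * qfactx x (m - r)) else 0

/-- Gaussian binomial coefficient. -/
def qbinom (m r : ℕ) : K := qbinomx qq m r

/-- The ı-divided powers `B^{(m)}_{p̄}` of `B` with central parameter `Z`,
given by the closed product formulas of the paper. -/
def iDP {A : Type*} [Ring A] [Algebra K A] (B Z : A) (p : ZMod 2) (m : ℕ) : A :=
  (qfact m)⁻¹ •
    ((if m % 2 = 1 then B else 1) *
      ((List.range (m / 2)).map (fun j =>
        B ^ 2 -
          ((qint (if p = 1 then 2 * (j : ℤ) + 1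
                  else if m % 2 = 1 then 2 * (j : ℤ) + 2 else 2 * (j : ℤ))) ^ 2 * qq) • Z)).prod)

/-- The usual divided power `x^{(k)} = x^k/[k]_q!`. -/
def dp {A : Type*} [Ring A] [Algebra K A] (x : A) (k : ℕ) : A := (qfact k)⁻¹ • x ^ k

theorem qq_ne_zero : qq ≠ 0 := RatFunc.X_ne_zero

theorem qq_pow_ne_one {k : ℕ} (hk : k ≠ 0) : qq ^ k ≠ 1 := by
  intro h
  have hX : (Polynomial.X ^ k : Polynomial ℚ) = 1 := by
    apply RatFunc.algebraMap_injective ℚ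
    simpa [qq] using h
  have hdeg := congrArg Polynomial.natDegree hX
  simp at hdeg
  exact hk hdeg

theorem qq_sub_inv_ne_zero : qq - qq⁻¹ ≠ 0 := by
  intro h
  apply qq_pow_ne_one two_ne_zero
  have hq := qq_ne_zero
  field_simp at h
  linear_combination h

theorem qint_natCast_ne_zero {n : ℕ} (hn : n ≠ 0) : qint n ≠ 0 := by
  refine div_ne_zero (fun h => ?_) qq_sub_inv_ne_zero
  apply qq_pow_ne_one (k := n + n) (by omega)
  have hq : qq ^ n ≠ 0 := pow_ne_zero _ qq_ne_zero
  rw [zpow_neg, zpow_natCast] at h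
  field_simp at h
  rw [pow_add]
  linear_combination h

theorem qint_zero : qint 0 = 0 := by simp [qint, qintx]

theorem qint_one : qint 1 = 1 := by
  simpa [qint, qintx] using div_self qq_sub_inv_ne_zero

/-- The three-term recursion of the balanced quantum integers. -/
theorem qint_add_two (m : ℤ) : qint (m + 2) = qint 2 * qint (m + 1) - qint m := by
  have hq := qq_ne_zero
  have hd := qq_sub_inv_ne_zero
  have htwo : qint 2 = qq + qq⁻¹ := by
    rw [qint, qintx, div_eq_iff hd, zpow_neg, zpow_ofNat]
    field_simp
    ring
  have hm : qq ^ m ≠ 0 := zpow_ne_zero _ hq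
  rw [htwo]
  simp only [qint, qintx]
  rw [← mul_div_assoc, ← sub_div]
  congr 1
  simp only [zpow_neg, zpow_add₀ hq, zpow_ofNat]
  field_simp
  ring

theorem qint_three : qint 3 = qint 2 ^ 2 - 1 := by
  have h := qint_add_two 1
  norm_num [qint_one] at h
  rw [h]
  ring

theorem qint_four : qint 4 = qint 2 ^ 3 - 2 * qint 2 := by
  have h := qint_add_two 2
  norm_num [qint_three] at h
  rw [h]
  ring

theorem qfact_succ (m : ℕ) : qfact (m + 1) = qfact m * qint ((m : ℤ) + 1) := by
  simp [qfact, qfactx, qint, Finset.prod_range_succ]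

theorem qfact_zero : qfact 0 = 1 := by simp [qfact, qfactx]

theorem qfact_one : qfact 1 = 1 := by
  simpa [qfact_zero, qint_one] using qfact_succ 0

theorem qfact_two : qfact 2 = qint 2 := by
  simpa [qfact_one] using qfact_succ 1

theorem qfact_three : qfact 3 = qint 2 * qint 3 := by
  simpa [qfact_two] using qfact_succ 2

theorem qfact_four : qfact 4 = qint 2 * qint 3 * qint 4 := by
  simpa [qfact_three] using qfact_succ 3

section DividedPowers

variable {A : Type*} [Ring A] [Algebra K A] (B Z : A)

theorem iDP_zero (p : ZMod 2) : iDP B Z p 0 = 1 := by simp [iDP, qfact_zero]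

theorem iDP_one (p : ZMod 2) : iDP B Z p 1 = B := by simp [iDP, qfact_one]

theorem iDP_even_two : iDP B Z 0 2 = (qint 2)⁻¹ • B ^ 2 := by
  simp [iDP, qfact_two, qint_zero]

theorem iDP_odd_two : iDP B Z 1 2 = (qint 2)⁻¹ • (B ^ 2 - qq • Z) := by
  simp [iDP, qfact_two, qint_one]

theorem iDP_even_three :
    iDP B Z 0 3 = (qint 2 * qint 3)⁻¹ • (B * (B ^ 2 - (qint 2 ^ 2 * qq) • Z)) := by
  simp [iDP, qfact_three]

theorem iDP_odd_three :
    iDP B Z 1 3 = (qint 2 * qint 3)⁻¹ • (B * (B ^ 2 - qq • Z)) := by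
  simp [iDP, qfact_three, qint_one]

theorem iDP_even_four :
    iDP B Z 0 4 =
      (qint 2 * qint 3 * qint 4)⁻¹ • (B ^ 2 * (B ^ 2 - (qint 2 ^ 2 * qq) • Z)) := by
  simp [iDP, qfact_four, qint_zero, List.range_succ]

theorem iDP_odd_four :
    iDP B Z 1 4 =
      (qint 2 * qint 3 * qint 4)⁻¹ •
        ((B ^ 2 - qq • Z) * (B ^ 2 - (qint 3 ^ 2 * qq) • Z)) := by
  simp [iDP, qfact_four, qint_one, List.range_succ]

end DividedPowers

section SerreRelation

variable {F A : Type*} [Field F] [Ring A] [Algebra F A] {t : F} {B X z : A}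

/-- The quadratic relation `B²X - t BXB + XB² = zX`, multiplied by
`L² - (t³ - 3t)LR + R² - (t² - 1)²z`, where `L` and `R` are left and right multiplication
by `B`. -/
theorem serre_quartic (hz : ∀ a : A, z * a = a * z)
    (hE : B ^ 2 * X - t • (B * X * B) + X * B ^ 2 - z * X = 0) :
    B ^ 2 * (B ^ 2 * X) - (t ^ 3 - 2 * t) • (B ^ 2 * (B * X * B))
      + ((t ^ 2 - 1) * (t ^ 2 - 2)) • (B ^ 2 * X * B ^ 2)
      - (t ^ 3 - 2 * t) • (B * X * B * B ^ 2) + X * B ^ 2 * B ^ 2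
      - (t ^ 4 - 2 * t ^ 2 + 2) • (z * (B ^ 2 * X))
      + ((t ^ 2 + 1) * (t ^ 3 - 2 * t)) • (z * (B * X * B))
      - (t ^ 4 - 2 * t ^ 2 + 2) • (z * (X * B ^ 2))
      + (t ^ 2 - 1) ^ 2 • (z * (z * X)) = 0 := by
  have hBz (w : A) : B * (z * w) = z * (B * w) := by rw [← mul_assoc, ← hz, mul_assoc]
  have hLL := congrArg (fun x => B * (B * x)) hE
  have hLR := congrArg (fun x => B * (x * B)) hE
  have hRR := congrArg (fun x => x * (B * B)) hE
  have hzE := congrArg (fun x => z * x) hE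
  simp only [pow_two B, mul_sub, sub_mul, mul_add, add_mul, smul_mul_assoc, mul_smul_comm,
    mul_assoc, hBz, mul_zero, zero_mul] at hLL hLR hRR hzE ⊢
  linear_combination (norm := module)
    hLL - (t ^ 3 - 3 * t) • hLR + hRR - (t ^ 2 - 1) ^ 2 • hzE

theorem quadratic_of_divided (ht : t ≠ 0) (hz : ∀ a : A, z * a = a * z)
    (h : X * (t⁻¹ • (B ^ 2 - z)) - B * X * B + t⁻¹ • B ^ 2 * X = 0) :
    B ^ 2 * X - t • (B * X * B) + X * B ^ 2 - z * X = 0 := by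
  have h' := congrArg (t • ·) h
  simp only [smul_zero, mul_smul_comm, smul_mul_assoc, smul_sub, smul_add, mul_sub,
    smul_inv_smul₀ ht, ← hz] at h'
  rw [← h']
  abel

theorem divided_serre_even {b c : F} (ht : t ≠ 0) (hb : b = t ^ 2 - 1) (hb0 : b ≠ 0)
    (hc : c = t ^ 3 - 2 * t) (hc0 : c ≠ 0) (hz : ∀ a : A, z * a = a * z)
    (hE : B ^ 2 * X - t • (B * X * B) + X * B ^ 2 - z * X = 0) :
    X * ((t * b * c)⁻¹ • ((B ^ 2 - z) * (B ^ 2 - b ^ 2 • z)))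
      - B * X * ((t * b)⁻¹ • (B * (B ^ 2 - z)))
      + t⁻¹ • B ^ 2 * X * (t⁻¹ • (B ^ 2 - z))
      - (t * b)⁻¹ • (B * (B ^ 2 - t ^ 2 • z)) * X * B
      + (t * b * c)⁻¹ • (B ^ 2 * (B ^ 2 - t ^ 2 • z)) * X = 0 := by
  have hBz' (w : A) : B * (z * w) = z * (B * w) := by rw [← mul_assoc, ← hz, mul_assoc]
  have hXz' (w : A) : X * (z * w) = z * (X * w) := by rw [← mul_assoc, ← hz, mul_assoc]
  have hQ := serre_quartic hz hE
  simp only [pow_two B, mul_sub, sub_mul, smul_mul_assoc, mul_smul_comm, mul_assoc,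
    ← hz B, ← hz X, hBz', hXz'] at hQ ⊢
  have hc' : t ^ 2 - 2 ≠ 0 := fun h0 => hc0 (by rw [hc]; linear_combination t * h0)
  have hcf : c = t * (t ^ 2 - 2) := by rw [hc]; ring
  rw [← smul_zero ((t * b * c)⁻¹), ← hQ]
  subst hb hcf
  match_scalars <;> field_simp <;> ring

theorem divided_serre_odd {b c : F} (ht : t ≠ 0) (hb : b = t ^ 2 - 1) (hb0 : b ≠ 0)
    (hc : c = t ^ 3 - 2 * t) (hc0 : c ≠ 0) (hz : ∀ a : A, z * a = a * z)
    (hE : B ^ 2 * X - t • (B * X * B) + X * B ^ 2 - z * X = 0) :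
    X * ((t * b * c)⁻¹ • (B ^ 2 * (B ^ 2 - t ^ 2 • z)))
      - B * X * ((t * b)⁻¹ • (B * (B ^ 2 - t ^ 2 • z)))
      + t⁻¹ • (B ^ 2 - z) * X * (t⁻¹ • B ^ 2)
      - (t * b)⁻¹ • (B * (B ^ 2 - z)) * X * B
      + (t * b * c)⁻¹ • ((B ^ 2 - z) * (B ^ 2 - b ^ 2 • z)) * X = 0 := by
  have hBz' (w : A) : B * (z * w) = z * (B * w) := by rw [← mul_assoc, ← hz, mul_assoc]
  have hXz' (w : A) : X * (z * w) = z * (X * w) := by rw [← mul_assoc, ← hz, mul_assoc]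
  have hQ := serre_quartic hz hE
  simp only [pow_two B, mul_sub, sub_mul, smul_mul_assoc, mul_smul_comm, mul_assoc,
    ← hz B, hBz', hXz'] at hQ ⊢
  have hc' : t ^ 2 - 2 ≠ 0 := fun h0 => hc0 (by rw [hc]; linear_combination t * h0)
  have hcf : c = t * (t ^ 2 - 2) := by rw [hc]; ring
  rw [← smul_zero ((t * b * c)⁻¹), ← hQ]
  subst hb hcf
  match_scalars <;> field_simp <;> ring

end SerreRelation

theorem stmt7 {A : Type*} [Ring A] [Algebra K A] (Bi Bj Z : A)
    (hZ : ∀ a : A, Z * a = a * Z)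
    (h : ∀ p : ZMod 2, ∑ r ∈ Finset.range 3,
        ((-1 : K) ^ r) • (iDP Bi Z p r * Bj * iDP Bi Z (p + 1) (2 - r)) = 0) :
    ∀ p : ZMod 2, ∑ r ∈ Finset.range 5,
        ((-1 : K) ^ r) • (iDP Bi Z p r * Bj * iDP Bi Z (p + 1) (4 - r)) = 0 := by
  have ht : qint 2 ≠ 0 := qint_natCast_ne_zero two_ne_zero
  have hb : qint 3 ≠ 0 := qint_natCast_ne_zero three_ne_zero
  have hc : qint 4 ≠ 0 := qint_natCast_ne_zero four_ne_zero
  have hz (a : A) : qq • Z * a = a * qq • Z := by rw [smul_mul_assoc, mul_smul_comm, hZ]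
  have hE : Bi ^ 2 * Bj - qint 2 • (Bi * Bj * Bi) + Bj * Bi ^ 2 - qq • Z * Bj = 0 := by
    apply quadratic_of_divided ht hz
    simpa [Finset.sum_range_succ, iDP_zero, iDP_one, iDP_even_two, iDP_odd_two,
      ← sub_eq_add_neg] using h 0
  intro p
  have hp : p = 0 ∨ p = 1 := by revert p; decide
  have htwo : (1 + 1 : ZMod 2) = 0 := by decide
  have hcube : (-1 : K) ^ 3 = -1 := by norm_num
  have hfourth : (-1 : K) ^ 4 = 1 := by norm_num
  rcases hp with rfl | rfl
  · have hS := divided_serre_even ht qint_three hb qint_four hc hz hE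
    simpa [Finset.sum_range_succ, iDP_zero, iDP_one, iDP_even_two, iDP_odd_two, iDP_even_three,
      iDP_odd_three, iDP_even_four, iDP_odd_four, hcube, hfourth, ← sub_eq_add_neg,
      smul_smul] using hS
  · have hS := divided_serre_odd ht qint_three hb qint_four hc hz hE
    simpa [Finset.sum_range_succ, iDP_zero, iDP_one, iDP_even_two, iDP_odd_two, iDP_even_three,
      iDP_odd_three, iDP_even_four, iDP_odd_four, hcube, hfourth, htwo,
      ← sub_eq_add_neg, smul_smul] using hS
end
end

section
/- Let A be a Q(q)-algebra, B_i, B_j ∈ A, Z central in A, a_{ij} = −1, and suppose B_i² B_j − [2]_q B_i B_j B_i + B_j B_i² = q Z B_j. Fix p̄ ∈ Z/2, n = 1, e ∈ {±1}, and define for m ≥ 0 the element ỹ_m ∈ A by the formulas (6)–(7) of the paper with q_i k̃_i r_i(T_{w_•}E_i) replaced by q Z (so ỹ_m is a Z[q,q^{−1}][Z]-linear combination of terms B^{(r)}_{i,p̄} B_j B^{(s)}_{i,p̄+1̄} with r + s + 2u = m). Then ỹ_m = 0 for all m ≥ 2 = 1 − a_{ij}. -/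
noncomputable section

/-- The element `ỹ_{i,j;1,m,p̄,t̄,e}` of the paper in the case `n = 1`, `a_{ij} = -1`,
with the central scalar `q_i k̃_i r_i(T_{w_•}E_i)` replaced by `q Z`. -/
def ytil {A : Type*} [Ring A] [Algebra K A] (Bi Bj Z : A) (p : ZMod 2) (e : ℤ) (m : ℕ) : A :=
  ∑ u ∈ Finset.range (m / 2 + 1), ∑ r ∈ Finset.range (m - 2 * u + 1),
    (qq ^ u *
      (if m % 2 = 0 then
        (if (r : ZMod 2) = p + 1 then
          (-1 : K) ^ r * qq ^ (-(e * (((m : ℤ) - 1) * ((r : ℤ) + (u : ℤ)) - (r : ℤ)))) *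
            qbinomx (qq ^ 2) ((m - 2) / 2) u
        else
          (-1 : K) ^ r * qq ^ (-(e * (((m : ℤ) - 3) * ((r : ℤ) + (u : ℤ)) + (r : ℤ)))) *
            qbinomx (qq ^ 2) ((m - 2) / 2) u)
      else
        (if (r : ZMod 2) = p + 1 then
          (-1 : K) ^ r * qq ^ (-(e * ((m : ℤ) - 2) * ((r : ℤ) + (u : ℤ)))) *
            qbinomx (qq ^ 2) ((m - 1) / 2) u
        else
          (-1 : K) ^ r * qq ^ (-(e * ((m : ℤ) - 2) * ((r : ℤ) + (u : ℤ)))) *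
            qbinomx (qq ^ 2) ((m - 3) / 2) u))) •
      (Z ^ u * (iDP Bi Z p r * Bj * iDP Bi Z (p + 1) (m - 2 * u - r)))

theorem qq_pow_ne_one_s12 {n : ℕ} (hn : n ≠ 0) : qq ^ n ≠ 1 := by
  intro h
  have h1 : (Polynomial.X : Polynomial ℚ) ^ n = 1 := by
    apply RatFunc.algebraMap_injective ℚ
    rw [map_pow, RatFunc.algebraMap_X, map_one]
    exact h
  have h2 := congrArg Polynomial.natDegree h1
  rw [Polynomial.natDegree_X_pow, Polynomial.natDegree_one] at h2
  exact hn h2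

theorem qq_zpow_ne_one {n : ℤ} (hn : n ≠ 0) : qq ^ n ≠ 1 := by
  obtain ⟨k, rfl | rfl⟩ := n.eq_nat_or_neg
  · rw [zpow_natCast]
    exact qq_pow_ne_one_s12 (by omega)
  · rw [zpow_neg, zpow_natCast, ne_eq, inv_eq_one]
    exact qq_pow_ne_one_s12 (by omega)

theorem zpow_sub_zpow_neg_ne_zero {x : K} (hx : x ≠ 0) {n : ℤ} (hn : x ^ (2 * n) ≠ 1) :
    x ^ n - x ^ (-n) ≠ 0 := by
  intro h
  apply hn
  rw [two_mul, zpow_add₀ hx]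
  nth_rewrite 1 [sub_eq_zero.mp h]
  rw [← zpow_add₀ hx, neg_add_cancel, zpow_zero]

theorem qintx_zero (x : K) : qintx x 0 = 0 := by simp [qintx]

theorem qintx_ne_zero {x : K} (hx : ∀ n : ℤ, n ≠ 0 → x ^ n ≠ 1) (hx0 : x ≠ 0) {n : ℤ}
    (hn : n ≠ 0) : qintx x n ≠ 0 := by
  have h1 := zpow_sub_zpow_neg_ne_zero hx0 (hx (2 * 1) (by norm_num))
  rw [zpow_neg, zpow_one] at h1
  exact div_ne_zero (zpow_sub_zpow_neg_ne_zero hx0 (hx _ (by omega))) h1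

theorem qint_ne_zero {n : ℤ} (hn : n ≠ 0) : qint n ≠ 0 :=
  qintx_ne_zero (fun _ => qq_zpow_ne_one) qq_ne_zero hn

theorem qq_sq_zpow_ne_one {n : ℤ} (hn : n ≠ 0) : (qq ^ 2) ^ n ≠ 1 := by
  rw [← zpow_natCast, ← zpow_mul]
  exact qq_zpow_ne_one (by simpa using hn)

theorem qintx_sq_ne_zero {n : ℤ} (hn : n ≠ 0) : qintx (qq ^ 2) n ≠ 0 :=
  qintx_ne_zero (fun _ => qq_sq_zpow_ne_one) (pow_ne_zero 2 qq_ne_zero) hn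

theorem qfactx_succ (x : K) (m : ℕ) : qfactx x (m + 1) = qfactx x m * qintx x ((m : ℤ) + 1) :=
  Finset.prod_range_succ _ _

theorem qfactx_sq_ne_zero (m : ℕ) : qfactx (qq ^ 2) m ≠ 0 :=
  Finset.prod_ne_zero_iff.mpr fun j _ => qintx_sq_ne_zero (by omega)

theorem qfact_ne_zero (m : ℕ) : qfact m ≠ 0 := by
  rw [qfact, qfactx]
  exact Finset.prod_ne_zero_iff.mpr fun j _ => qint_ne_zero (by omega)

/-- Gaussian binomials in `q²` with an integral lower index. -/
def qbinomZ (n : ℕ) (u : ℤ) : K := if 0 ≤ u then qbinomx (qq ^ 2) n u.toNat else 0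

theorem qbinomZ_natCast (n u : ℕ) : qbinomZ n u = qbinomx (qq ^ 2) n u := by simp [qbinomZ]

theorem qbinomx_zero_right (n : ℕ) : qbinomx (qq ^ 2) n 0 = 1 := by
  rw [qbinomx, if_pos (Nat.zero_le n), Nat.sub_zero, show qfactx (qq ^ 2) 0 = 1 from rfl, one_mul,
    div_self (qfactx_sq_ne_zero n)]

theorem qintx_mul_qbinomZ (n : ℕ) {u : ℤ} (hu : 0 ≤ u) :
    qintx (qq ^ 2) u * qbinomZ (n + 1) u = qintx (qq ^ 2) ((n : ℤ) + 1) * qbinomZ n (u - 1) := by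
  obtain ⟨v, rfl⟩ := Int.eq_ofNat_of_zero_le hu
  rcases v with _ | v
  · simp [qbinomZ, qintx_zero]
  · rw [show ((v + 1 : ℕ) : ℤ) - 1 = (v : ℕ) by push_cast; ring, qbinomZ_natCast,
      qbinomZ_natCast, qbinomx, qbinomx]
    by_cases h : v ≤ n
    · have h1 := qfactx_sq_ne_zero v
      have h2 := qfactx_sq_ne_zero (n - v)
      have h3 := qintx_sq_ne_zero (n := (v : ℤ) + 1) (by omega)
      rw [if_pos h, if_pos (by omega), Nat.add_sub_add_right, qfactx_succ, qfactx_succ]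
      push_cast
      field_simp
    · rw [if_neg h, if_neg (by omega)]
      simp

theorem qintx_mul_qbinomZ_left (n : ℕ) {u : ℤ} (hu : 0 ≤ u) :
    qintx (qq ^ 2) ((n : ℤ) + 1 - u) * qbinomZ (n + 1) u =
      qintx (qq ^ 2) ((n : ℤ) + 1) * qbinomZ n u := by
  obtain ⟨v, rfl⟩ := Int.eq_ofNat_of_zero_le hu
  rw [qbinomZ_natCast, qbinomZ_natCast, qbinomx, qbinomx]
  by_cases h : v ≤ n
  · obtain ⟨d, rfl⟩ := Nat.exists_eq_add_of_le h
    have h1 := qfactx_sq_ne_zero v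
    have h2 := qfactx_sq_ne_zero d
    have h3 := qintx_sq_ne_zero (n := (d : ℤ) + 1) (by omega)
    rw [if_pos h, if_pos (by omega), show v + d + 1 - v = d + 1 by omega,
      show v + d - v = d by omega, qfactx_succ, qfactx_succ,
      show ((v + d : ℕ) : ℤ) + 1 - (v : ℤ) = d + 1 by push_cast; ring]
    field_simp
  · rw [if_neg h]
    by_cases h' : v ≤ n + 1
    · rw [show (n : ℤ) + 1 - (v : ℤ) = 0 by omega]
      simp [qintx_zero]
    · rw [if_neg h']
      simp

theorem qint_eq_of_eq_or_eq_inv {w : K} (hw : w = qq ∨ w = qq⁻¹) (n : ℤ) :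
    qint n = (w ^ n - w ^ (-n)) / (w - w⁻¹) := by
  rcases hw with rfl | rfl
  · rfl
  · rw [qint, qintx, inv_zpow', inv_zpow', inv_inv, neg_neg, ← neg_sub (qq ^ n), ← neg_sub qq,
      neg_div_neg_eq]

theorem qintx_sq_eq_of_eq_or_eq_inv {w : K} (hw : w = qq ∨ w = qq⁻¹) (n : ℤ) :
    qintx (qq ^ 2) n = (w ^ (2 * n) - w ^ (-(2 * n))) / (w ^ 2 - (w ^ 2)⁻¹) := by
  have h (x : K) : (x ^ 2) ^ n = x ^ (2 * n) := by rw [← zpow_natCast, ← zpow_mul]; rfl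
  have h' (x : K) : (x ^ 2) ^ (-n) = x ^ (-(2 * n)) := by
    rw [← zpow_natCast, ← zpow_mul, ← mul_neg]; rfl
  rw [qintx, h, h']
  rcases hw with rfl | rfl
  · rfl
  · rw [inv_zpow', inv_zpow', inv_pow, inv_inv, neg_neg, ← neg_sub (qq ^ (2 * n)),
      ← neg_sub (qq ^ 2), neg_div_neg_eq]

theorem zpow_ne_one_of_eq_or_eq_inv {w : K} (hw : w = qq ∨ w = qq⁻¹) {n : ℤ} (hn : n ≠ 0) :
    w ^ n ≠ 1 := by
  rcases hw with rfl | rfl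
  · exact qq_zpow_ne_one hn
  · rw [inv_zpow']
    exact qq_zpow_ne_one (neg_ne_zero.mpr hn)

theorem ne_zero_of_eq_or_eq_inv {w : K} (hw : w = qq ∨ w = qq⁻¹) : w ≠ 0 := by
  rcases hw with rfl | rfl
  · exact qq_ne_zero
  · exact inv_ne_zero qq_ne_zero

theorem sq_sub_inv_sq_ne_zero {w : K} (hw : w = qq ∨ w = qq⁻¹) : w ^ 2 - (w ^ 2)⁻¹ ≠ 0 := by
  have h := zpow_sub_zpow_neg_ne_zero (ne_zero_of_eq_or_eq_inv hw) (n := 2)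
    (zpow_ne_one_of_eq_or_eq_inv hw (by norm_num))
  simpa using h

theorem qbinomZ_absorb {w : K} (hw : w = qq ∨ w = qq⁻¹) (n : ℕ) {u : ℤ} (hu : 0 ≤ u) :
    (w ^ (2 * u) - w ^ (-(2 * u))) * qbinomZ (n + 1) u =
      (w ^ (2 * ((n : ℤ) + 1)) - w ^ (-(2 * ((n : ℤ) + 1)))) * qbinomZ n (u - 1) := by
  have h := qintx_mul_qbinomZ n hu
  rw [qintx_sq_eq_of_eq_or_eq_inv hw, qintx_sq_eq_of_eq_or_eq_inv hw, div_mul_eq_mul_div,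
    div_mul_eq_mul_div, div_left_inj' (sq_sub_inv_sq_ne_zero hw)] at h
  exact h

theorem qbinomZ_absorb_left {w : K} (hw : w = qq ∨ w = qq⁻¹) (n : ℕ) {u : ℤ} (hu : 0 ≤ u) :
    (w ^ (2 * ((n : ℤ) + 1 - u)) - w ^ (-(2 * ((n : ℤ) + 1 - u)))) * qbinomZ (n + 1) u =
      (w ^ (2 * ((n : ℤ) + 1)) - w ^ (-(2 * ((n : ℤ) + 1)))) * qbinomZ n u := by
  have h := qintx_mul_qbinomZ_left n hu
  rw [qintx_sq_eq_of_eq_or_eq_inv hw, qintx_sq_eq_of_eq_or_eq_inv hw, div_mul_eq_mul_div,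
    div_mul_eq_mul_div, div_left_inj' (sq_sub_inv_sq_ne_zero hw)] at h
  exact h

/-- The coefficient of `(qZ)^u B^{(r)} B_j B^{(s)}` in `ytil`, for integral `u` and `r`, at `w = q^e`. -/
def ycoef (w : K) (p : ZMod 2) (m : ℕ) (u r : ℤ) : K :=
  (-1) ^ r *
    (if m % 2 = 0 then
      (if (r : ZMod 2) = p + 1 then w ^ (-(((m : ℤ) - 1) * (r + u) - r))
        else w ^ (-(((m : ℤ) - 3) * (r + u) + r))) * qbinomZ ((m - 2) / 2) u
    else
      w ^ (-(((m : ℤ) - 2) * (r + u))) *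
        (if (r : ZMod 2) = p + 1 then qbinomZ ((m - 1) / 2) u else qbinomZ ((m - 3) / 2) u))

theorem zmod_two_add_one_ne (x : ZMod 2) : x + 1 ≠ x := by revert x; decide

theorem zmod_two_ne_add_one (x : ZMod 2) : x ≠ x + 1 := by revert x; decide

theorem zmod_two_add_one_add_one (x : ZMod 2) : x + 1 + 1 = x := by revert x; decide

theorem zmod_two_sub_one (x : ZMod 2) : x - 1 = x + 1 := by revert x; decide

theorem zmod_two_eq_or (p x : ZMod 2) : p = x ∨ p = x + 1 := by revert p x; decide

theorem qbinomZ_eq_mul {w : K} (hw : w = qq ∨ w = qq⁻¹) (k : ℕ) {u : ℤ} (hu : 0 ≤ u) :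
    w ^ 4 * (w ^ (k : ℤ)) ^ 4 - 1 ≠ 0 ∧
      qbinomZ k (u - 1) = (w ^ (2 * u) - w ^ (-(2 * u))) * qbinomZ (k + 1) u *
        (w ^ (2 * ((k : ℤ) + 1)) / (w ^ 4 * (w ^ (k : ℤ)) ^ 4 - 1)) ∧
      qbinomZ k u = (w ^ (2 * ((k : ℤ) + 1 - u)) - w ^ (-(2 * ((k : ℤ) + 1 - u)))) *
        qbinomZ (k + 1) u * (w ^ (2 * ((k : ℤ) + 1)) / (w ^ 4 * (w ^ (k : ℤ)) ^ 4 - 1)) := by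
  have hw0 := ne_zero_of_eq_or_eq_inv hw
  have hp : w ^ 4 * (w ^ (k : ℤ)) ^ 4 = w ^ (2 * ((k : ℤ) + 1)) * w ^ (2 * ((k : ℤ) + 1)) := by
    rw [mul_add, zpow_add₀ hw0, mul_comm (2 : ℤ) k, zpow_mul, mul_one, zpow_ofNat, zpow_ofNat]
    ring
  have hk : w ^ 4 * (w ^ (k : ℤ)) ^ 4 - 1 ≠ 0 := by
    rw [hp, ← zpow_add₀ hw0, sub_ne_zero]
    exact zpow_ne_one_of_eq_or_eq_inv hw (by omega)
  have hx : w ^ (2 * ((k : ℤ) + 1)) ≠ 0 := zpow_ne_zero _ hw0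
  have h1 := qbinomZ_absorb hw k hu
  have h2 := qbinomZ_absorb_left hw k hu
  rw [zpow_neg w (2 * ((k : ℤ) + 1))] at h1 h2
  refine ⟨hk, ?_, ?_⟩
  · rw [h1]
    rw [hp, ← pow_two] at hk ⊢
    generalize w ^ (2 * ((k : ℤ) + 1)) = x at *
    field_simp
  · rw [h2]
    rw [hp, ← pow_two] at hk ⊢
    generalize w ^ (2 * ((k : ℤ) + 1)) = x at *
    field_simp

theorem sub_inv_ne_zero {w : K} (hw : w = qq ∨ w = qq⁻¹) : w - w⁻¹ ≠ 0 := by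
  have h := zpow_sub_zpow_neg_ne_zero (ne_zero_of_eq_or_eq_inv hw) (n := 1)
    (zpow_ne_one_of_eq_or_eq_inv hw (by norm_num))
  simpa using h

theorem ycoef_rec_even_ne {w : K} (hw : w = qq ∨ w = qq⁻¹) (k : ℕ) {u : ℤ} (hu : 0 ≤ u) (r : ℤ) :
    w ^ (-(4 * (k : ℤ) + 3)) *
        (w ^ (-((2 * k - 1) * (r - 1 + u) + (r - 1))) * qbinomZ k u * qint r +
          w ^ (-((2 * k - 1) * (r + u) + r + 1)) * qbinomZ k (u - 1) * qint (r + 1)) +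
      (w ^ (-((2 * k + 1) * (r + u) - r)) * qbinomZ k u * qint (2 * k + 3 - 2 * u - r) +
        w ^ (-((2 * k + 1) * (r + u - 1) - r)) * qbinomZ k (u - 1) *
          qint (2 * k + 4 - 2 * u - r)) =
    qint (2 * k + 3) * (w ^ (-((2 * k + 1) * (r + u))) * qbinomZ (k + 1) u) -
      w ^ (-(4 * (k : ℤ) + 2)) * qint (2 * k) *
        (w ^ (-((2 * k - 1) * (r + u - 1))) * qbinomZ k (u - 1)) := by
  have hw0 := ne_zero_of_eq_or_eq_inv hw
  obtain ⟨hk, h1, h2⟩ := qbinomZ_eq_mul hw k hu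
  have hd := sub_inv_ne_zero hw
  simp only [qint_eq_of_eq_or_eq_inv hw]
  rw [h1, h2]
  clear h1 h2
  generalize qbinomZ (k + 1) u = b at *
  generalize w - w⁻¹ = d at *
  generalize (k : ℤ) = k at *
  ring_nf at hk ⊢
  simp only [zpow_add₀ hw0, zpow_sub₀ hw0, zpow_neg, zpow_mul, zpow_ofNat] at hk ⊢
  field_simp
  ring

theorem ycoef_rec_even_eq {w : K} (hw : w = qq ∨ w = qq⁻¹) (k : ℕ) {u : ℤ} (hu : 0 ≤ u) (r : ℤ) :
    w ^ (-(4 * (k : ℤ) + 3)) *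
        (w ^ (-((2 * k + 1) * (r - 1 + u) - (r - 1))) * qbinomZ k u * qint r) +
      w ^ (-((2 * k - 1) * (r + u) + r)) * qbinomZ k u * qint (2 * k + 3 - 2 * u - r) =
    qint (2 * k + 3) * (w ^ (-((2 * k + 1) * (r + u))) * qbinomZ k u) -
      w ^ (-(4 * (k : ℤ) + 2)) * qint (2 * k) *
        (w ^ (-((2 * k - 1) * (r + u - 1))) * qbinomZ (k - 1) (u - 1)) := by
  have hw0 := ne_zero_of_eq_or_eq_inv hw
  have hd := sub_inv_ne_zero hw
  have h1 : qint (2 * k) * qbinomZ (k - 1) (u - 1) = qint (2 * u) * qbinomZ k u := by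
    rw [qint_eq_of_eq_or_eq_inv hw, qint_eq_of_eq_or_eq_inv hw, div_mul_eq_mul_div,
      div_mul_eq_mul_div, div_left_inj' hd]
    rcases k with _ | k
    · rcases hu.eq_or_lt with rfl | hu
      · simp
      · have h0 : qbinomZ 0 u = 0 := by
          rw [qbinomZ, if_pos hu.le, qbinomx, if_neg (by omega)]
        simp [h0]
    · simpa using (qbinomZ_absorb hw k hu).symm
  rw [mul_assoc (w ^ (-(4 * (k : ℤ) + 2))), mul_left_comm (qint (2 * k)), h1]
  simp only [qint_eq_of_eq_or_eq_inv hw]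
  clear h1
  generalize qbinomZ k u = b at *
  generalize w - w⁻¹ = d at *
  generalize (k : ℤ) = k at *
  ring_nf
  simp only [zpow_add₀ hw0, zpow_sub₀ hw0, zpow_neg, zpow_mul, zpow_ofNat]
  field_simp
  ring

theorem ycoef_rec_odd_ne {w : K} (hw : w = qq ∨ w = qq⁻¹) (k : ℕ) {u : ℤ} (hu : 0 ≤ u) (r : ℤ) :
    w ^ (-(4 * (k : ℤ) + 5)) *
        (w ^ (-((2 * k + 1) * (r - 1 + u))) * qbinomZ k u * qint r +
          w ^ (-((2 * k + 1) * (r + u))) * qbinomZ k (u - 1) * qint (r + 1)) +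
      w ^ (-((2 * k + 1) * (r + u))) * qbinomZ (k + 1) u * qint (2 * k + 4 - 2 * u - r) =
    qint (2 * k + 4) * (w ^ (-((2 * k + 3) * (r + u) - r)) * qbinomZ (k + 1) u) -
      w ^ (-(4 * (k : ℤ) + 4)) * qint (2 * k + 1) *
        (w ^ (-((2 * k + 1) * (r + u - 1) - r)) * qbinomZ k (u - 1)) := by
  have hw0 := ne_zero_of_eq_or_eq_inv hw
  obtain ⟨hk, h1, h2⟩ := qbinomZ_eq_mul hw k hu
  have hd := sub_inv_ne_zero hw
  simp only [qint_eq_of_eq_or_eq_inv hw]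
  rw [h1, h2]
  clear h1 h2
  generalize qbinomZ (k + 1) u = b at *
  generalize w - w⁻¹ = d at *
  generalize (k : ℤ) = k at *
  ring_nf at hk ⊢
  simp only [zpow_add₀ hw0, zpow_sub₀ hw0, zpow_neg, zpow_mul, zpow_ofNat] at hk ⊢
  field_simp
  ring

theorem ycoef_rec_odd_eq {w : K} (hw : w = qq ∨ w = qq⁻¹) (k : ℕ) {u : ℤ} (hu : 0 ≤ u) (r : ℤ) :
    w ^ (-(4 * (k : ℤ) + 5)) *
        (w ^ (-((2 * k + 1) * (r - 1 + u))) * qbinomZ (k + 1) u * qint r) +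
      (w ^ (-((2 * k + 1) * (r + u))) * qbinomZ k u * qint (2 * k + 4 - 2 * u - r) +
        w ^ (-((2 * k + 1) * (r + u - 1))) * qbinomZ k (u - 1) * qint (2 * k + 5 - 2 * u - r)) =
    qint (2 * k + 4) * (w ^ (-((2 * k + 1) * (r + u) + r)) * qbinomZ (k + 1) u) -
      w ^ (-(4 * (k : ℤ) + 4)) * qint (2 * k + 1) *
        (w ^ (-((2 * k - 1) * (r + u - 1) + r)) * qbinomZ k (u - 1)) := by
  have hw0 := ne_zero_of_eq_or_eq_inv hw
  obtain ⟨hk, h1, h2⟩ := qbinomZ_eq_mul hw k hu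
  have hd := sub_inv_ne_zero hw
  simp only [qint_eq_of_eq_or_eq_inv hw]
  rw [h1, h2]
  clear h1 h2
  generalize qbinomZ (k + 1) u = b at *
  generalize w - w⁻¹ = d at *
  generalize (k : ℤ) = k at *
  ring_nf at hk ⊢
  simp only [zpow_add₀ hw0, zpow_sub₀ hw0, zpow_neg, zpow_mul, zpow_ofNat] at hk ⊢
  field_simp
  ring

theorem ycoef_rec {w : K} (hw : w = qq ∨ w = qq⁻¹) (p : ZMod 2) {m : ℕ} (hm : 2 ≤ m) {u : ℤ}
    (hu : 0 ≤ u) (r : ℤ) :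
    w ^ (-(2 * (m : ℤ) - 1)) *
        (ycoef w p m u (r - 1) * qint r +
          ycoef w p m (u - 1) (r + 1) * (if ((r + 1 : ℤ) : ZMod 2) = p then qint (r + 1) else 0)) -
      (ycoef w p m u r * qint (m + 1 - 2 * u - r) +
        ycoef w p m (u - 1) r *
          (if ((m + 2 - 2 * u - r : ℤ) : ZMod 2) = p + 1 then qint (m + 2 - 2 * u - r) else 0)) =
    -(qint (m + 1) * ycoef w p (m + 1) u r) +
      w ^ (-(2 * (m : ℤ) - 2)) * qint (m - 2) * ycoef w p (m - 1) (u - 1) r := by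
  have hneg1 : (-1 : K) ^ (r - 1) = -(-1) ^ r := by
    rw [zpow_sub₀ (by norm_num), zpow_one, div_neg, div_one]
  have hneg2 : (-1 : K) ^ (r + 1) = -(-1) ^ r := by
    rw [zpow_add₀ (by norm_num)]; simp
  have h2 : (2 : ZMod 2) = 0 := rfl
  have hneg (x : ZMod 2) : -x = x := by revert x; decide
  obtain ⟨k, rfl | rfl⟩ : ∃ k, m = 2 * k + 2 ∨ m = 2 * k + 3 := ⟨(m - 2) / 2, by omega⟩
  · have e1 : (2 * k + 2) % 2 = 0 := by omega
    have e2 : ¬ (2 * k + 2 + 1) % 2 = 0 := by omega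
    have e3 : ¬ (2 * k + 2 - 1) % 2 = 0 := by omega
    have e4 : (2 * k + 2 - 2) / 2 = k := by omega
    have e5 : (2 * k + 2 + 1 - 1) / 2 = k + 1 := by omega
    have e6 : (2 * k + 2 + 1 - 3) / 2 = k := by omega
    have e7 : (2 * k + 2 - 1 - 1) / 2 = k := by omega
    have e8 : (2 * k + 2 - 1 - 3) / 2 = k - 1 := by omega
    have e9 : ((2 * k + 2 - 1 : ℕ) : ℤ) = 2 * k + 1 := by omega
    have hs : (((2 * k + 2 : ℕ) + 2 - 2 * u - r : ℤ) : ZMod 2) = r := by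
      push_cast
      simp [h2, hneg]
    rcases zmod_two_eq_or p r with rfl | rfl
    · have H := ycoef_rec_even_eq hw k hu r
      simp only [ycoef, hneg1, hneg2, hs, e1, e2, e3, e4, e5, e6, e7, e8, e9, if_true, if_false,
        Int.cast_add, Int.cast_sub, Int.cast_one, zmod_two_sub_one, zmod_two_add_one_ne,
        zmod_two_ne_add_one]
      push_cast
      ring_nf at H ⊢
      linear_combination (-(-1) ^ r) * H
    · have H := ycoef_rec_even_ne hw k hu r
      simp only [ycoef, hneg1, hneg2, hs, e1, e2, e3, e4, e5, e6, e7, e8, e9, if_true, if_false,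
        Int.cast_add, Int.cast_sub, Int.cast_one, zmod_two_sub_one, zmod_two_add_one_ne,
        zmod_two_add_one_add_one]
      push_cast
      ring_nf at H ⊢
      linear_combination (-(-1) ^ r) * H
  · have e1 : ¬ (2 * k + 3) % 2 = 0 := by omega
    have e2 : (2 * k + 3 + 1) % 2 = 0 := by omega
    have e3 : (2 * k + 3 - 1) % 2 = 0 := by omega
    have e4 : (2 * k + 3 + 1 - 2) / 2 = k + 1 := by omega
    have e5 : (2 * k + 3 - 1) / 2 = k + 1 := by omega
    have e6 : (2 * k + 3 - 3) / 2 = k := by omega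
    have e7 : (2 * k + 3 - 1 - 2) / 2 = k := by omega
    have e9 : ((2 * k + 3 - 1 : ℕ) : ℤ) = 2 * k + 2 := by omega
    have h3 : (3 : ZMod 2) = 1 := rfl
    have hs : (((2 * k + 3 : ℕ) + 2 - 2 * u - r : ℤ) : ZMod 2) = r + 1 := by
      push_cast
      simp [h2, h3, hneg, sub_eq_add_neg, add_comm]
    rcases zmod_two_eq_or p r with rfl | rfl
    · have H := ycoef_rec_odd_eq hw k hu r
      simp only [ycoef, hneg1, hneg2, hs, e1, e2, e3, e4, e5, e6, e7, e9, if_true, if_false,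
        Int.cast_add, Int.cast_sub, Int.cast_one, zmod_two_sub_one, zmod_two_add_one_ne,
        zmod_two_ne_add_one]
      push_cast
      ring_nf at H ⊢
      linear_combination (-(-1) ^ r) * H
    · have H := ycoef_rec_odd_ne hw k hu r
      simp only [ycoef, hneg1, hneg2, hs, e1, e2, e3, e4, e5, e6, e7, e9, if_true, if_false,
        Int.cast_add, Int.cast_sub, Int.cast_one, zmod_two_sub_one, zmod_two_add_one_ne,
        zmod_two_add_one_add_one]
      push_cast
      ring_nf at H ⊢
      linear_combination (-(-1) ^ r) * H

section Algebra

variable {A : Type*} [Ring A] [Algebra K A]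

theorem commute_iDP (B Z : A) (hZ : ∀ a : A, Z * a = a * Z) (p : ZMod 2) (m : ℕ) :
    Commute B (iDP B Z p m) := by
  refine Commute.smul_right (Commute.mul_right ?_ (Commute.list_prod_right _ _ ?_)) _
  · split_ifs
    · exact Commute.refl B
    · exact Commute.one_right B
  · intro x hx
    obtain ⟨j, -, rfl⟩ := List.mem_map.mp hx
    exact ((Commute.refl B).pow_right 2).sub_right (Commute.smul_right (hZ B).symm _)

/-- The ı-divided power without its quantum factorial. -/
def iProd (B Z : A) (p : ZMod 2) (m : ℕ) : A :=
  (if m % 2 = 1 then B else 1) *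
    ((List.range (m / 2)).map (fun j =>
      B ^ 2 -
        ((qint (if p = 1 then 2 * (j : ℤ) + 1
                else if m % 2 = 1 then 2 * (j : ℤ) + 2 else 2 * (j : ℤ))) ^ 2 * qq) • Z)).prod

theorem iDP_eq_smul_iProd (B Z : A) (p : ZMod 2) (m : ℕ) :
    iDP B Z p m = (qfact m)⁻¹ • iProd B Z p m := rfl

theorem iProd_one_even (B Z : A) (n : ℕ) : iProd B Z 1 (2 * n) =
    ((List.range n).map fun j : ℕ => B ^ 2 - (qint (2 * (j : ℤ) + 1) ^ 2 * qq) • Z).prod := by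
  simp [iProd, ← List.map_eq_flatMap, Function.comp_def]

theorem iProd_one_odd (B Z : A) (n : ℕ) : iProd B Z 1 (2 * n + 1) =
    B * ((List.range n).map fun j : ℕ => B ^ 2 - (qint (2 * (j : ℤ) + 1) ^ 2 * qq) • Z).prod := by
  simp [iProd, ← List.map_eq_flatMap, Function.comp_def, show (2 * n + 1) / 2 = n by omega]

theorem iProd_zero_even (B Z : A) (n : ℕ) : iProd B Z 0 (2 * n) =
    ((List.range n).map fun j : ℕ => B ^ 2 - (qint (2 * (j : ℤ)) ^ 2 * qq) • Z).prod := by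
  simp [iProd, ← List.map_eq_flatMap, Function.comp_def]

theorem iProd_zero_odd (B Z : A) (n : ℕ) : iProd B Z 0 (2 * n + 1) =
    B * ((List.range n).map fun j : ℕ => B ^ 2 - (qint (2 * (j : ℤ) + 2) ^ 2 * qq) • Z).prod := by
  simp [iProd, ← List.map_eq_flatMap, Function.comp_def, show (2 * n + 1) / 2 = n by omega]

theorem iProd_zero_even_succ (B Z : A) (n : ℕ) :
    iProd B Z 0 (2 * (n + 1)) = B * iProd B Z 0 (2 * n + 1) := by
  rw [iProd_zero_even, iProd_zero_odd, List.range_succ_eq_map, List.map_cons, List.prod_cons,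
    List.map_map, ← mul_assoc, ← pow_two]
  simp [qint_zero, Function.comp_def, mul_add]

theorem mul_prod_eq (B Z : A) (hZ : ∀ a : A, Z * a = a * Z) (f : ℕ → K) (n : ℕ) :
    B * (B * ((List.range n).map fun j : ℕ => B ^ 2 - (f j ^ 2 * qq) • Z).prod) =
      ((List.range (n + 1)).map fun j : ℕ => B ^ 2 - (f j ^ 2 * qq) • Z).prod +
        f n ^ 2 • (qq • Z * ((List.range n).map fun j : ℕ => B ^ 2 - (f j ^ 2 * qq) • Z).prod) := by
  have hc : Commute B ((List.range n).map fun j : ℕ => B ^ 2 - (f j ^ 2 * qq) • Z).prod := by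
    refine Commute.list_prod_right _ _ fun x hx => ?_
    obtain ⟨j, -, rfl⟩ := List.mem_map.mp hx
    exact ((Commute.refl B).pow_right 2).sub_right (Commute.smul_right (hZ B).symm _)
  rw [List.range_succ, List.map_append, List.prod_append, List.map_singleton,
    List.prod_singleton, mul_sub, ← (hc.pow_left 2).eq, ← mul_assoc, ← pow_two, mul_smul_comm,
    ← hZ, smul_mul_assoc, smul_smul, sub_add_cancel]

theorem mul_iProd (B Z : A) (hZ : ∀ a : A, Z * a = a * Z) (p : ZMod 2) (m : ℕ) :
    B * iProd B Z p m = iProd B Z p (m + 1) +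
      (if (m : ZMod 2) = p then qint m ^ 2 else 0) • (qq • Z * iProd B Z p (m - 1)) := by
  have h2 : (2 : ZMod 2) = 0 := rfl
  obtain ⟨n, rfl | rfl⟩ : ∃ n, m = 2 * n ∨ m = 2 * n + 1 := ⟨m / 2, by omega⟩
  · rcases zmod_two_eq_or p 0 with rfl | rfl
    · rw [if_pos (by push_cast; simp [h2])]
      rcases n with _ | n
      · simp [iProd, qint_zero]
      · rw [iProd_zero_even_succ, iProd_zero_odd, show 2 * (n + 1) - 1 = 2 * n + 1 by omega,
          iProd_zero_odd, iProd_zero_odd, mul_prod_eq B Z hZ (fun j => qint (2 * (j : ℤ) + 2)),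
          mul_add, mul_smul_comm, ← mul_assoc B (qq • Z), mul_smul_comm qq B Z, ← hZ B,
          ← smul_mul_assoc qq Z B, mul_assoc (qq • Z)]
        push_cast
        rw [mul_add (2 : ℤ), mul_one]
    · rw [if_neg (by push_cast; simp [h2]), zero_smul, add_zero, zero_add, iProd_one_even,
        iProd_one_odd]
  · rcases zmod_two_eq_or p 0 with rfl | rfl
    · rw [if_neg (by push_cast; simp [h2]), zero_smul, add_zero,
        show 2 * n + 1 + 1 = 2 * (n + 1) by ring, iProd_zero_even_succ]
    · rw [if_pos (by push_cast; simp [h2]), show 2 * n + 1 + 1 = 2 * (n + 1) by ring, zero_add,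
        Nat.add_sub_cancel, iProd_one_odd, iProd_one_even, iProd_one_even,
        mul_prod_eq B Z hZ (fun j => qint (2 * (j : ℤ) + 1))]
      push_cast
      rfl

theorem mul_iDP (B Z : A) (hZ : ∀ a : A, Z * a = a * Z) (p : ZMod 2) (m : ℕ) :
    B * iDP B Z p m = qint (m + 1) • iDP B Z p (m + 1) +
      (if (m : ZMod 2) = p then qint m else 0) • (qq • Z * iDP B Z p (m - 1)) := by
  have h1 := qfact_ne_zero m
  have h2 : qint ((m : ℤ) + 1) ≠ 0 := qint_ne_zero (by omega)
  rw [iDP_eq_smul_iProd, mul_smul_comm, mul_iProd B Z hZ, iDP_eq_smul_iProd, iDP_eq_smul_iProd,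
    qfact_succ, smul_add, smul_smul, smul_smul, mul_smul_comm, smul_smul]
  congr 2
  · field_simp
  · split_ifs
    · rcases m with _ | m
      · simp [qint_zero]
      · have h3 := qfact_ne_zero m
        have h4 : qint ((m : ℤ) + 1) ≠ 0 := qint_ne_zero (by omega)
        rw [Nat.add_sub_cancel, qfact_succ]
        push_cast
        field_simp
    · simp

theorem sum_range_shift {M : Type*} [AddCommGroup M] (F : ℕ → M) (N : ℕ) (h0 : F 0 = 0)
    (hN : F N = 0) : ∑ r ∈ Finset.range N, F (r + 1) = ∑ r ∈ Finset.range N, F r := by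
  have h := Finset.sum_range_succ' F N
  rw [Finset.sum_range_succ, h0, hN, add_zero, add_zero] at h
  exact h.symm

/-- The element `(qZ)^u B^{(r)} B_j B^{(s)}`. -/
def yterm (B Bj Z : A) (p : ZMod 2) (u r s : ℕ) : A :=
  (qq • Z) ^ u * (iDP B Z p r * Bj * iDP B Z (p + 1) s)

theorem commute_smul_central {Z : A} (hZ : ∀ a : A, Z * a = a * Z) (x : K) (a : A) :
    Commute (x • Z) a := Commute.smul_left (hZ a) x

theorem mul_yterm {B Bj Z : A} (hZ : ∀ a : A, Z * a = a * Z) (p : ZMod 2) (u r s : ℕ) :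
    B * yterm B Bj Z p u r s = qint (r + 1) • yterm B Bj Z p u (r + 1) s +
      (if (r : ZMod 2) = p then qint r else 0) • yterm B Bj Z p (u + 1) (r - 1) s := by
  have hc := ((commute_smul_central hZ qq B).pow_left u).eq
  simp only [yterm]
  rw [← mul_assoc, ← hc, mul_assoc, ← mul_assoc B, ← mul_assoc B, mul_iDP B Z hZ, pow_succ]
  simp only [add_mul, mul_add, smul_mul_assoc, mul_smul_comm, mul_assoc]

theorem yterm_mul {B Bj Z : A} (hZ : ∀ a : A, Z * a = a * Z) (p : ZMod 2) (u r s : ℕ) :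
    yterm B Bj Z p u r s * B = qint (s + 1) • yterm B Bj Z p u r (s + 1) +
      (if (s : ZMod 2) = p + 1 then qint s else 0) • yterm B Bj Z p (u + 1) r (s - 1) := by
  have hc := (commute_smul_central hZ qq (iDP B Z p r * Bj)).eq
  simp only [yterm]
  rw [mul_assoc, mul_assoc (iDP B Z p r * Bj), ← (commute_iDP B Z hZ (p + 1) s).eq,
    mul_iDP B Z hZ, mul_add, mul_add, mul_smul_comm, mul_smul_comm, mul_smul_comm, mul_smul_comm,
    ← mul_assoc _ (qq • Z), ← hc, mul_assoc (qq • Z), ← mul_assoc _ (qq • Z), ← pow_succ]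

theorem smul_mul_yterm (B Bj Z : A) (p : ZMod 2) (u r s : ℕ) :
    qq • Z * yterm B Bj Z p u r s = yterm B Bj Z p (u + 1) r s := by
  rw [yterm, yterm, ← mul_assoc, ← pow_succ']

/-- `ycoef` cut off outside the range of summation. -/
def ycut (w : K) (p : ZMod 2) (m : ℕ) (u r : ℤ) : K :=
  if 2 * u + r ≤ m then ycoef w p m u r else 0

theorem ycut_of_lt (w : K) (p : ZMod 2) {m : ℕ} {u r : ℤ} (h : (m : ℤ) < 2 * u + r) :
    ycut w p m u r = 0 := if_neg (not_le.mpr h)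

theorem ycut_of_le (w : K) (p : ZMod 2) {m : ℕ} {u r : ℤ} (h : 2 * u + r ≤ m) :
    ycut w p m u r = ycoef w p m u r := if_pos h

theorem ycut_neg_one (w : K) (p : ZMod 2) (m : ℕ) (r : ℤ) : ycut w p m (-1) r = 0 := by
  simp [ycut, ycoef, qbinomZ]

theorem ytil_eq_sum (B Bj Z : A) (p : ZMod 2) (e : ℤ) {m N : ℕ} (hN : m < N) :
    ytil B Bj Z p e m = ∑ u ∈ Finset.range N, ∑ r ∈ Finset.range N,
      ycut (qq ^ e) p m u r • yterm B Bj Z p u r (m - 2 * u - r) := by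
  have hinner (u : ℕ) (hu : u ∈ Finset.range (m / 2 + 1)) :
      ∑ r ∈ Finset.range (m - 2 * u + 1),
        ycut (qq ^ e) p m u r • yterm B Bj Z p u r (m - 2 * u - r) =
      ∑ r ∈ Finset.range N,
        ycut (qq ^ e) p m u r • yterm B Bj Z p u r (m - 2 * u - r) := by
    rw [Finset.mem_range] at hu
    refine Finset.sum_subset (Finset.range_subset_range.mpr (by omega)) fun r _ hr => ?_
    rw [Finset.mem_range] at hr
    rw [ycut_of_lt _ _ (by omega), zero_smul]
  have houter : ∑ u ∈ Finset.range (m / 2 + 1), ∑ r ∈ Finset.range N,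
        ycut (qq ^ e) p m u r • yterm B Bj Z p u r (m - 2 * u - r) =
      ∑ u ∈ Finset.range N, ∑ r ∈ Finset.range N,
        ycut (qq ^ e) p m u r • yterm B Bj Z p u r (m - 2 * u - r) := by
    refine Finset.sum_subset (Finset.range_subset_range.mpr (by omega)) fun u _ hu => ?_
    rw [Finset.mem_range] at hu
    refine Finset.sum_eq_zero fun r _ => ?_
    rw [ycut_of_lt _ _ (by omega), zero_smul]
  rw [← houter, ← Finset.sum_congr rfl hinner, ytil]
  refine Finset.sum_congr rfl fun u hu => Finset.sum_congr rfl fun r hr => ?_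
  rw [Finset.mem_range] at hu hr
  rw [ycut_of_le _ _ (by omega), yterm, smul_pow, smul_mul_assoc, smul_smul, ycoef, Int.cast_natCast,
    qbinomZ_natCast, qbinomZ_natCast, qbinomZ_natCast, zpow_natCast, mul_comm (qq ^ u)]
  simp only [← zpow_mul, mul_neg, ← mul_assoc]
  congr 2
  split_ifs <;> simp only [mul_assoc]

theorem sum_range_shift_left {M : Type*} [AddCommGroup M] (F : ℕ → ℕ → M) (N : ℕ)
    (h0 : ∀ r, F 0 r = 0) (hN : ∀ r, F N r = 0) :
    ∑ u ∈ Finset.range N, ∑ r ∈ Finset.range N, F (u + 1) r =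
      ∑ u ∈ Finset.range N, ∑ r ∈ Finset.range N, F u r :=
  sum_range_shift (fun u => ∑ r ∈ Finset.range N, F u r) N
    (Finset.sum_eq_zero fun r _ => h0 r) (Finset.sum_eq_zero fun r _ => hN r)

theorem sum_range_shift_right {M : Type*} [AddCommGroup M] (F : ℕ → ℕ → M) (N : ℕ)
    (h0 : ∀ u, F u 0 = 0) (hN : ∀ u, F u N = 0) :
    ∑ u ∈ Finset.range N, ∑ r ∈ Finset.range N, F u (r + 1) =
      ∑ u ∈ Finset.range N, ∑ r ∈ Finset.range N, F u r :=
  Finset.sum_congr rfl fun u _ => sum_range_shift (F u) N (h0 u) (hN u)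

theorem mul_ytil {B Bj Z : A} (hZ : ∀ a : A, Z * a = a * Z) (p : ZMod 2) (e : ℤ) {m N : ℕ}
    (hN : m + 1 < N) :
    B * ytil B Bj Z p e m = ∑ u ∈ Finset.range N, ∑ r ∈ Finset.range N,
      (ycut (qq ^ e) p m u (r - 1) * qint r +
        ycut (qq ^ e) p m (u - 1) (r + 1) *
          (if ((r + 1 : ℤ) : ZMod 2) = p then qint (r + 1) else 0)) •
        yterm B Bj Z p u r (m + 1 - 2 * u - r) := by
  simp only [add_smul, Finset.sum_add_distrib]
  rw [← sum_range_shift_right (fun u r : ℕ => (ycut (qq ^ e) p m u (r - 1) * qint r) •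
      yterm B Bj Z p u r (m + 1 - 2 * u - r)) N (by simp [qint_zero])
      (fun u => by rw [ycut_of_lt _ _ (by omega)]; simp),
    ← sum_range_shift_left (fun u r : ℕ => (ycut (qq ^ e) p m (u - 1) (r + 1) *
      (if ((r + 1 : ℤ) : ZMod 2) = p then qint (r + 1) else 0)) •
      yterm B Bj Z p u r (m + 1 - 2 * u - r)) N (by simp [ycut_neg_one])
      (fun r => by rw [ycut_of_lt _ _ (by omega)]; simp)]
  have h := sum_range_shift_right (fun u r : ℕ => (ycut (qq ^ e) p m u r *
      (if (r : ZMod 2) = p then qint r else 0)) •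
      yterm B Bj Z p (u + 1) (r - 1) (m - 2 * u - r)) N (by simp [qint_zero])
      (fun u => by rw [ycut_of_lt _ _ (by omega)]; simp)
  rw [ytil_eq_sum B Bj Z p e (N := N) (by omega)]
  simp only [Finset.mul_sum, mul_smul_comm, mul_yterm hZ, smul_add, smul_smul,
    Finset.sum_add_distrib]
  rw [← h]
  congr 1
  · refine Finset.sum_congr rfl fun u _ => Finset.sum_congr rfl fun r _ => ?_
    rw [show m + 1 - 2 * u - (r + 1) = m - 2 * u - r by omega]
    push_cast
    rw [add_sub_cancel_right]
  · refine Finset.sum_congr rfl fun u _ => Finset.sum_congr rfl fun r _ => ?_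
    rw [show m + 1 - 2 * (u + 1) - r = m - 2 * u - (r + 1) by omega, Nat.add_sub_cancel]
    push_cast
    rw [add_sub_cancel_right]

theorem ytil_mul {B Bj Z : A} (hZ : ∀ a : A, Z * a = a * Z) (p : ZMod 2) (e : ℤ) {m N : ℕ}
    (hN : m + 1 < N) :
    ytil B Bj Z p e m * B = ∑ u ∈ Finset.range N, ∑ r ∈ Finset.range N,
      (ycut (qq ^ e) p m u r * qint (m + 1 - 2 * u - r) +
        ycut (qq ^ e) p m (u - 1) r *
          (if ((m + 2 - 2 * u - r : ℤ) : ZMod 2) = p + 1 then qint (m + 2 - 2 * u - r) else 0)) •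
        yterm B Bj Z p u r (m + 1 - 2 * u - r) := by
  simp only [add_smul, Finset.sum_add_distrib]
  rw [← sum_range_shift_left (fun u r : ℕ => (ycut (qq ^ e) p m (u - 1) r *
      (if ((m + 2 - 2 * u - r : ℤ) : ZMod 2) = p + 1 then qint (m + 2 - 2 * u - r) else 0)) •
      yterm B Bj Z p u r (m + 1 - 2 * u - r)) N (by simp [ycut_neg_one])
      (fun r => by rw [ycut_of_lt _ _ (by omega)]; simp)]
  rw [ytil_eq_sum B Bj Z p e (N := N) (by omega)]
  simp only [Finset.sum_mul, smul_mul_assoc, yterm_mul hZ, smul_add, smul_smul,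
    Finset.sum_add_distrib]
  congr 1
  · refine Finset.sum_congr rfl fun u _ => Finset.sum_congr rfl fun r _ => ?_
    by_cases h : 2 * u + r ≤ m
    · rw [show m + 1 - 2 * u - r = m - 2 * u - r + 1 by omega,
        show ((m - 2 * u - r : ℕ) : ℤ) + 1 = m + 1 - 2 * u - r by omega]
    · rw [ycut_of_lt _ _ (by omega)]
      simp
  · refine Finset.sum_congr rfl fun u _ => Finset.sum_congr rfl fun r _ => ?_
    rw [show ((u + 1 : ℕ) : ℤ) - 1 = u by omega]
    by_cases h : 2 * u + r ≤ m
    · rw [show m + 1 - 2 * (u + 1) - r = m - 2 * u - r - 1 by omega,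
        show (m + 2 - 2 * (u + 1 : ℕ) - r : ℤ) = (m - 2 * u - r : ℕ) by omega, Int.cast_natCast]
    · rw [ycut_of_lt _ _ (by omega)]
      simp

theorem smul_mul_ytil (B Bj Z : A) (p : ZMod 2) (e : ℤ) {m N : ℕ} (hm : 1 ≤ m) (hN : m + 1 < N) :
    qq • Z * ytil B Bj Z p e (m - 1) = ∑ u ∈ Finset.range N, ∑ r ∈ Finset.range N,
      ycut (qq ^ e) p (m - 1) (u - 1) r • yterm B Bj Z p u r (m + 1 - 2 * u - r) := by
  rw [← sum_range_shift_left (fun u r : ℕ => ycut (qq ^ e) p (m - 1) (u - 1) r •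
      yterm B Bj Z p u r (m + 1 - 2 * u - r)) N (by simp [ycut_neg_one])
      (fun r => by rw [ycut_of_lt _ _ (by omega)]; simp),
    ytil_eq_sum B Bj Z p e (N := N) (by omega)]
  simp only [Finset.mul_sum, mul_smul_comm, smul_mul_yterm]
  refine Finset.sum_congr rfl fun u _ => Finset.sum_congr rfl fun r _ => ?_
  rw [show m + 1 - 2 * (u + 1) - r = m - 1 - 2 * u - r by omega,
    show ((u + 1 : ℕ) : ℤ) - 1 = u by omega]

theorem ycut_rec {w : K} (hw : w = qq ∨ w = qq⁻¹) (p : ZMod 2) {m : ℕ} (hm : 2 ≤ m) {u : ℤ}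
    (hu : 0 ≤ u) (r : ℤ) :
    w ^ (-(2 * (m : ℤ) - 1)) *
        (ycut w p m u (r - 1) * qint r +
          ycut w p m (u - 1) (r + 1) * (if ((r + 1 : ℤ) : ZMod 2) = p then qint (r + 1) else 0)) -
      (ycut w p m u r * qint (m + 1 - 2 * u - r) +
        ycut w p m (u - 1) r *
          (if ((m + 2 - 2 * u - r : ℤ) : ZMod 2) = p + 1 then qint (m + 2 - 2 * u - r) else 0)) =
    -(qint (m + 1) * ycut w p (m + 1) u r) +
      w ^ (-(2 * (m : ℤ) - 2)) * qint (m - 2) * ycut w p (m - 1) (u - 1) r := by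
  by_cases h : 2 * u + r ≤ m + 1
  · have h1 : ycut w p m u r * qint (m + 1 - 2 * u - r) =
        ycoef w p m u r * qint (m + 1 - 2 * u - r) := by
      by_cases h' : 2 * u + r ≤ m
      · rw [ycut_of_le _ _ h']
      · rw [show (m : ℤ) + 1 - 2 * u - r = 0 by omega, qint_zero, mul_zero, mul_zero]
    rw [h1, ycut_of_le _ _ (by omega), ycut_of_le _ _ (by omega), ycut_of_le _ _ (by omega),
      ycut_of_le _ _ (by omega), ycut_of_le _ _ (by omega)]
    exact ycoef_rec hw p hm hu r
  · have h1 : ycut w p m (u - 1) r * (if ((m + 2 - 2 * u - r : ℤ) : ZMod 2) = p + 1 then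
        qint (m + 2 - 2 * u - r) else 0) = 0 := by
      by_cases h' : 2 * u + r ≤ m + 2
      · rw [show (m : ℤ) + 2 - 2 * u - r = 0 by omega, qint_zero, ite_self, mul_zero]
      · rw [ycut_of_lt _ _ (by omega), zero_mul]
    rw [h1, ycut_of_lt _ _ (by omega), ycut_of_lt _ _ (by omega), ycut_of_lt _ _ (by omega),
      ycut_of_lt _ _ (by omega), ycut_of_lt _ _ (by omega)]
    simp

theorem ytil_rec {B Bj Z : A} (hZ : ∀ a : A, Z * a = a * Z) (p : ZMod 2) {e : ℤ}
    (he : e = 1 ∨ e = -1) {m : ℕ} (hm : 2 ≤ m) :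
    (qq ^ e) ^ (-(2 * (m : ℤ) - 1)) • (B * ytil B Bj Z p e m) - ytil B Bj Z p e m * B =
      -(qint (m + 1) • ytil B Bj Z p e (m + 1)) +
        ((qq ^ e) ^ (-(2 * (m : ℤ) - 2)) * qint (m - 2)) •
          (qq • Z * ytil B Bj Z p e (m - 1)) := by
  have hw : qq ^ e = qq ∨ qq ^ e = qq⁻¹ := by
    rcases he with rfl | rfl
    · exact Or.inl (zpow_one _)
    · exact Or.inr (zpow_neg_one _)
  rw [mul_ytil hZ p e (N := m + 2) (by omega), ytil_mul hZ p e (N := m + 2) (by omega),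
    smul_mul_ytil B Bj Z p e (N := m + 2) (by omega) (by omega),
    ytil_eq_sum B Bj Z p e (m := m + 1) (N := m + 2) (by omega)]
  simp only [Finset.smul_sum, ← Finset.sum_sub_distrib, ← Finset.sum_neg_distrib,
    ← Finset.sum_add_distrib, smul_smul, ← sub_smul, ← neg_smul, ← add_smul]
  refine Finset.sum_congr rfl fun u _ => Finset.sum_congr rfl fun r _ => ?_
  rw [ycut_rec hw p hm (by omega)]

theorem ytil_two {B Bj Z : A} (h : B ^ 2 * Bj - qint 2 • (B * Bj * B) + Bj * B ^ 2 = qq • (Z * Bj))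
    (hZ : ∀ a : A, Z * a = a * Z) (p : ZMod 2) (e : ℤ) : ytil B Bj Z p e 2 = 0 := by
  have h2 : qint 2 ≠ 0 := qint_ne_zero (by norm_num)
  have hf0 : qfact 0 = 1 := rfl
  have hf1 : qfact 1 = 1 := by rw [qfact_succ, hf0]; simp [qint_one]
  have hf2 : qfact 2 = qint 2 := by rw [qfact_succ, hf1]; simp [one_add_one_eq_two]
  have hb : qbinomZ 0 1 = 0 := by simp [qbinomZ, qbinomx]
  have hb0 : qbinomZ 0 0 = 1 := by simpa using (qbinomZ_natCast 0 0).trans (qbinomx_zero_right 0)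
  rw [ytil_eq_sum B Bj Z p e (N := 3) (by norm_num)]
  have hlt (u r : ℕ) (hur : 2 < 2 * u + r) : ycut (qq ^ e) p 2 u r = 0 :=
    ycut_of_lt _ _ (by exact_mod_cast hur)
  have h10 : ycut (qq ^ e) p 2 (1 : ℕ) (0 : ℕ) = 0 := by
    rw [ycut_of_le _ _ (by norm_num)]
    simp [ycoef, hb]
  have hr (r : ℕ) (hr : r ≤ 2) : ycut (qq ^ e) p 2 (0 : ℕ) r = (-1) ^ r := by
    rw [ycut_of_le _ _ (by push_cast; omega), ycoef]
    simp only [Nat.mod_self, if_true, Nat.sub_self, Nat.zero_div, Nat.cast_zero, hb0, add_zero]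
    rw [show -(((2 : ℕ) - 1) * (r : ℤ) - r) = 0 by push_cast; ring,
      show -(((2 : ℕ) - 3) * (r : ℤ) + r) = 0 by push_cast; ring]
    simp
  simp only [Finset.sum_range_succ, Finset.sum_range_zero, zero_add]
  rw [hr 0 (by norm_num), hr 1 (by norm_num), hr 2 (by norm_num), h10, hlt 1 1 (by norm_num),
    hlt 1 2 (by norm_num), hlt 2 0 (by norm_num), hlt 2 1 (by norm_num), hlt 2 2 (by norm_num)]
  have hp0 (p : ZMod 2) : iDP B Z p 0 = 1 := by simp [iDP, hf0]
  have hp1 (p : ZMod 2) : iDP B Z p 1 = B := by simp [iDP, hf1]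
  have hp20 : iDP B Z 0 2 = (qint 2)⁻¹ • B ^ 2 := by simp [iDP, hf2, qint_zero]
  have hp21 : iDP B Z 1 2 = (qint 2)⁻¹ • (B ^ 2 - qq • Z) := by simp [iDP, hf2, qint_one]
  have hmid : B * Bj * B = (qint 2)⁻¹ • (B ^ 2 * Bj + Bj * B ^ 2 - qq • (Z * Bj)) := by
    rw [← h, eq_inv_smul_iff₀ h2]
    abel
  simp only [yterm, pow_zero, one_mul, zero_smul, add_zero, one_smul, pow_one, neg_smul,
    Nat.mul_zero, Nat.sub_zero, Nat.sub_self, Nat.add_one_sub_one, neg_one_sq, hp0, hp1, mul_one,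
    hmid]
  rcases zmod_two_eq_or p 0 with rfl | rfl
  · rw [zero_add, hp20, hp21, smul_mul_assoc, mul_smul_comm, mul_sub, mul_smul_comm, ← hZ Bj]
    simp only [smul_sub, smul_add]
    abel
  · rw [zmod_two_add_one_add_one, zero_add, hp20, hp21, smul_mul_assoc, mul_smul_comm, sub_mul,
      smul_mul_assoc]
    simp only [smul_sub, smul_add]
    abel

end Algebra

theorem stmt12 {A : Type*} [Ring A] [Algebra K A] (Bi Bj Z : A)
    (hZ : ∀ a : A, Z * a = a * Z)
    (h : Bi ^ 2 * Bj - qint 2 • (Bi * Bj * Bi) + Bj * Bi ^ 2 = qq • (Z * Bj))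
    (p : ZMod 2) (e : ℤ) (he : e = 1 ∨ e = -1) :
    ∀ m : ℕ, 2 ≤ m → ytil Bi Bj Z p e m = 0 := by
  intro m hm
  have hstep (k : ℕ) : ytil Bi Bj Z p e (k + 2) = 0 ∧ ytil Bi Bj Z p e (k + 3) = 0 := by
    have next {m : ℕ} (hm : 2 ≤ m) (h0 : ytil Bi Bj Z p e m = 0)
        (h1 : qint (m - 2) • ytil Bi Bj Z p e (m - 1) = 0) : ytil Bi Bj Z p e (m + 1) = 0 := by
      have hrec := ytil_rec (B := Bi) (Bj := Bj) hZ p he hm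
      rw [h0, mul_zero, zero_mul, smul_zero, sub_zero, mul_smul, ← mul_smul_comm (qint _), h1,
        mul_zero, smul_zero, add_zero, zero_eq_neg] at hrec
      exact (smul_eq_zero_iff_right (qint_ne_zero (by omega))).mp hrec
    induction k with
    | zero =>
      have h2 := ytil_two h hZ p e
      exact ⟨h2, next le_rfl h2 (by simp [qint_zero])⟩
    | succ k ih =>
      refine ⟨ih.2, next (by omega) ih.2 ?_⟩
      rw [show k + 3 - 1 = k + 2 from rfl, ih.1, smul_zero]
  have hk := (hstep (m - 2)).1
  rwa [Nat.sub_add_cancel hm] at hk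
end
end
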